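/- Consider a solvable system of bipolar max-product fuzzy relation equations max_{j=1..m} max(a_{ij}^+ · x_j, a_{ij}^- · n_P(x_j)) = b_i, i ∈ {1,...,n}, let S^+ = {J^+ ⊆ {1,...,m} : (J^+, J^-) is a feasible pair for some J^- ⊆ {1,...,m}}, and let M^+ be the set of maximal elements of S^+ with respect to set inclusion. For J^+ ⊆ {1,...,m}, let f(J^+) be the tuple whose j-th component is 0 if j ∉ J^+ and min{b_h ←_P a_{hj}^+ : h ∈ {1,...,n}} if j ∈ J^+. Then f restricted to M^+ is a bijection from M^+ onto the set of maximal solutions of the system; in particular, the set of maximal solutions of the system equals {f(J^+) : J^+ ∈ M^+}, and the number of maximal solutions of the system coincides with the number of maximal elements of S^+. -/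

import Mathlib

open Finset
open scoped Classical

/-- Product negation: `nP 0 = 1`, `nP x = 0` for `x ≠ 0`. -/
noncomputable def nP (x : ℝ) : ℝ := if x = 0 then 1 else 0

/-- Residuated implication of the product: `resP z x = min 1 (z / x)` for `x > 0`,
and `resP z 0 = 1`. -/
noncomputable def resP (z x : ℝ) : ℝ := if x = 0 then 1 else min 1 (z / x)

/-- Left-hand side of a bipolar max-product fuzzy relation equation:
`max_{j=1..m} max (a_j^+ * x_j) (a_j^- * nP (x_j))`. -/
noncomputable def eqLHS {m : ℕ} (hm : 0 < m) (ap an : Fin m → ℝ) (x : Fin m → ℝ) : ℝ :=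
  Finset.univ.sup' ⟨⟨0, hm⟩, Finset.mem_univ _⟩
    (fun j => max (ap j * x j) (an j * nP (x j)))

/-- `x` is a solution of the system of bipolar max-product FREs with coefficient
matrices `ap`, `an` and independent terms `b`. -/
def SysSol {m n : ℕ} (hm : 0 < m) (ap an : Fin n → Fin m → ℝ) (b : Fin n → ℝ)
    (x : Fin m → ℝ) : Prop :=
  (∀ j, x j ∈ Set.Icc (0:ℝ) 1) ∧ ∀ i, eqLHS hm (ap i) (an i) x = b i

/-- `(Jp, Jm)` is a feasible pair of index sets with respect to the system. -/
def FeasiblePair {m n : ℕ} (ap an : Fin n → Fin m → ℝ) (b : Fin n → ℝ)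
    (Jp Jm : Finset (Fin m)) : Prop :=
  Jp ∪ Jm = Finset.univ ∧ Jp ∩ Jm = ∅ ∧
    ∀ i,
      (b i = 0 → (∀ j ∈ Jp, ap i j = 0) ∧ ∀ j ∈ Jm, an i j = 0) ∧
      (0 < b i →
        (∃ j ∈ Jp, b i ≤ ap i j ∧ ∀ h, resP (b i) (ap i j) ≤ resP (b h) (ap h j)) ∨
        (∃ j ∈ Jm, an i j = b i ∧ ∀ h, an h j ≤ b h))

/-!
For a solution `x`, each positive entry `x j` satisfies `a⁺ i j * x j ≤ b i` for all `i`, so it is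
at most `f j = min_h (b h ← a⁺ h j)`, and raising it to `f j` does not break any equation. Hence
every solution lies below the tuple obtained by filling its support with the values `f j`. The
support is a feasible set, so it lies in a maximal feasible set `J`, and everything reduces to
showing that filling `J` yields a solution.

The only inequality that feasibility does not provide is `a⁻ i j ≤ b i` for `j ∉ J`. If it fails,
then every solution is positive at `j`, so column `j` of `a⁺` vanishes wherever `b` does, and
`insert j J` is again feasible, contradicting maximality.
-/

section Order

variable {α β : Type*}

lemma setOf_maximal [Preorder α] (P : α → Prop) :
    {a | Maximal P a} = {a | P a ∧ ∀ b, P b → ¬ a < b} :=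
  Set.ext fun _ => maximal_iff_forall_gt.trans <|
    and_congr_right fun _ => forall_congr' fun _ => imp_not_comm

lemma bijOn_maximal_of_le_comp [PartialOrder α] [Finite α] [PartialOrder β] {P : α → Prop}
    {Q : β → Prop} {f : α → β} {g : β → α} (hf : Monotone f)
    (hf_reflect : ∀ a a', P a → f a ≤ f a' → a ≤ a') (hfQ : ∀ a, Maximal P a → Q (f a))
    (hgP : ∀ y, Q y → P (g y)) (hle : ∀ y, Q y → y ≤ f (g y)) :
    Set.BijOn f {a | Maximal P a} {y | Maximal Q y} := by
  refine ⟨fun a ha => ⟨hfQ a ha, fun y hy hay => ?_⟩, fun a ha a' ha' heq => ?_, fun y hy => ?_⟩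
  · have hga : a ≤ g y := hf_reflect a (g y) ha.prop (hay.trans (hle y hy))
    exact (hle y hy).trans (hf (ha.le_of_ge (hgP y hy) hga))
  · exact (hf_reflect a a' ha.prop heq.le).antisymm (hf_reflect a' a ha'.prop heq.ge)
  · obtain ⟨a, hga, ha⟩ := Finite.exists_le_maximal (hgP y hy.prop)
    exact ⟨a, ha, (hy.eq_of_le (hfQ a ha) ((hle y hy.prop).trans (hf hga))).symm⟩

end Order

lemma le_resP_iff {a b x : ℝ} (ha : 0 ≤ a) (hb : 0 ≤ b) (hx : x ≤ 1) :
    x ≤ resP b a ↔ a * x ≤ b := by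
  unfold resP
  split_ifs with h
  · simp [h, hb, hx]
  · rw [le_min_iff, le_div_iff₀' (ha.lt_of_ne' h), and_iff_right hx]

lemma resP_le_one (b a : ℝ) : resP b a ≤ 1 := by
  unfold resP
  split_ifs
  exacts [le_rfl, min_le_left _ _]

lemma resP_pos {a b : ℝ} (ha : 0 ≤ a) (hb : 0 ≤ b) (hab : b = 0 → a = 0) : 0 < resP b a := by
  unfold resP
  split_ifs with h
  · exact one_pos
  · exact lt_min one_pos (div_pos (hb.lt_of_ne' (mt hab h)) (ha.lt_of_ne' h))

lemma resP_mul_le {a x : ℝ} (ha : a ≠ 0) : resP (a * x) a ≤ x := by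
  rw [resP, if_neg ha, mul_div_cancel_left₀ x ha]
  exact min_le_right _ _

lemma mul_resP_of_le {a b : ℝ} (hb : 0 < b) (hba : b ≤ a) : a * resP b a = b := by
  have ha : 0 < a := hb.trans_le hba
  rw [resP, if_neg ha.ne', min_eq_right (div_le_one_of_le₀ hba ha.le), mul_div_cancel₀ b ha.ne']

section Equation

variable {m : ℕ} {hm : 0 < m} {ap an x : Fin m → ℝ} {c : ℝ}

lemma eqLHS_nonneg (hap : ∀ j, 0 ≤ ap j) (hx : ∀ j, 0 ≤ x j) : 0 ≤ eqLHS hm ap an x :=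
  (le_sup'_iff _).2 ⟨⟨0, hm⟩, mem_univ _, le_max_of_le_left (mul_nonneg (hap _) (hx _))⟩

lemma eqLHS_le_iff (hc : 0 ≤ c) :
    eqLHS hm ap an x ≤ c ↔ ∀ j, ap j * x j ≤ c ∧ (x j = 0 → an j ≤ c) := by
  refine (sup'_le_iff _ _).trans ?_
  simp only [mem_univ, true_imp_iff, max_le_iff]
  refine forall_congr' fun j => and_congr_right fun _ => ?_
  by_cases hj : x j = 0 <;> simp [nP, hj, hc]

lemma le_eqLHS_iff (hc : 0 < c) :
    c ≤ eqLHS hm ap an x ↔ ∃ j, c ≤ ap j * x j ∨ x j = 0 ∧ c ≤ an j := by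
  refine (le_sup'_iff _).trans ?_
  simp only [mem_univ, true_and, le_max_iff]
  refine exists_congr fun j => or_congr_right ?_
  by_cases hj : x j = 0 <;> simp [nP, hj, hc]

end Equation

section System

variable {m n : ℕ} {hm : 0 < m} {ap an : Fin n → Fin m → ℝ} {b : Fin n → ℝ}

namespace SysSol

variable {x : Fin m → ℝ}

lemma rhs_nonneg (hap : ∀ i j, 0 ≤ ap i j) (hx : SysSol hm ap an b x) (i : Fin n) : 0 ≤ b i :=
  hx.2 i ▸ eqLHS_nonneg (hap i) fun j => (hx.1 j).1

lemma ap_mul_le (hap : ∀ i j, 0 ≤ ap i j) (hx : SysSol hm ap an b x) (i : Fin n) (j : Fin m) :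
    ap i j * x j ≤ b i :=
  ((eqLHS_le_iff (hx.rhs_nonneg hap i)).1 (hx.2 i).le j).1

lemma an_le (hap : ∀ i j, 0 ≤ ap i j) (hx : SysSol hm ap an b x) (i : Fin n) {j : Fin m}
    (hj : x j = 0) : an i j ≤ b i :=
  ((eqLHS_le_iff (hx.rhs_nonneg hap i)).1 (hx.2 i).le j).2 hj

lemma ap_eq_zero (hap : ∀ i j, 0 ≤ ap i j) (hx : SysSol hm ap an b x) {i : Fin n} {j : Fin m}
    (hj : x j ≠ 0) (hi : b i = 0) : ap i j = 0 := by
  have hprod : ap i j * x j = 0 :=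
    (hi ▸ hx.ap_mul_le hap i j).antisymm (mul_nonneg (hap i j) (hx.1 j).1)
  exact (mul_eq_zero.1 hprod).resolve_right hj

lemma exists_term_eq (hap : ∀ i j, 0 ≤ ap i j) (hx : SysSol hm ap an b x) {i : Fin n}
    (hi : 0 < b i) : ∃ j, ap i j * x j = b i ∨ x j = 0 ∧ an i j = b i := by
  obtain ⟨j, hj⟩ := (le_eqLHS_iff hi).1 (hx.2 i).ge
  exact ⟨j, hj.imp (hx.ap_mul_le hap i j).antisymm
    fun h => ⟨h.1, (hx.an_le hap i h.1).antisymm h.2⟩⟩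

end SysSol

/-- Membership in the collection `S⁺` of first components of feasible pairs. -/
def FeasibleSet (ap an : Fin n → Fin m → ℝ) (b : Fin n → ℝ) (J : Finset (Fin m)) : Prop :=
  ∃ Jm, FeasiblePair ap an b J Jm

lemma feasibleSet_iff {J : Finset (Fin m)} :
    FeasibleSet ap an b J ↔ ∀ i,
      (b i = 0 → (∀ j ∈ J, ap i j = 0) ∧ ∀ j ∉ J, an i j = 0) ∧
      (0 < b i →
        (∃ j ∈ J, b i ≤ ap i j ∧ ∀ h, resP (b i) (ap i j) ≤ resP (b h) (ap h j)) ∨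
        (∃ j ∉ J, an i j = b i ∧ ∀ h, an h j ≤ b h)) := by
  constructor
  · rintro ⟨Jm, hunion, hinter, hJ⟩
    obtain rfl : Jm = Jᶜ := (IsCompl.of_eq hinter hunion).compl_eq.symm
    simpa only [mem_compl] using hJ
  · intro hJ
    exact ⟨Jᶜ, union_compl J, inter_compl J, by simpa only [mem_compl] using hJ⟩

lemma SysSol.feasibleSet_support {x : Fin m → ℝ} (hap : ∀ i j, 0 ≤ ap i j)
    (han : ∀ i j, 0 ≤ an i j) (hx : SysSol hm ap an b x) :
    FeasibleSet ap an b {j | x j ≠ 0} := by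
  simp only [feasibleSet_iff, mem_filter_univ, not_not]
  refine fun i => ⟨fun hi => ⟨fun j hj => hx.ap_eq_zero hap hj hi, fun j hj => ?_⟩, fun hi => ?_⟩
  · exact (hi ▸ hx.an_le hap i hj).antisymm (han i j)
  · obtain ⟨j, hj | ⟨hj, hneg⟩⟩ := hx.exists_term_eq hap hi
    · have hprod : ap i j * x j ≠ 0 := hj ▸ hi.ne'
      have hres : resP (b i) (ap i j) ≤ x j := hj ▸ resP_mul_le (left_ne_zero_of_mul hprod)
      refine .inl ⟨j, right_ne_zero_of_mul hprod, ?_, fun h => hres.trans ?_⟩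
      · exact hj ▸ mul_le_of_le_one_right (hap i j) (hx.1 j).2
      · exact (le_resP_iff (hap h j) (hx.rhs_nonneg hap h) (hx.1 j).2).2 (hx.ap_mul_le hap h j)
    · exact .inr ⟨j, hj, hneg, fun h => hx.an_le hap h hj⟩

lemma FeasibleSet.insert {J : Finset (Fin m)} {i : Fin n} {j : Fin m}
    (hJ : FeasibleSet ap an b J) (hzero : ∀ k, b k = 0 → ap k j = 0) (hlt : b i < an i j) :
    FeasibleSet ap an b (insert j J) := by
  rw [feasibleSet_iff] at hJ ⊢
  refine fun k => ⟨fun hk => ⟨?_, fun l hl => ?_⟩, fun hk => ?_⟩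
  · exact (forall_mem_insert _ _ _).2 ⟨hzero k hk, ((hJ k).1 hk).1⟩
  · exact ((hJ k).1 hk).2 l fun hlJ => hl (mem_insert_of_mem hlJ)
  · rcases (hJ k).2 hk with ⟨l, hl, hpos⟩ | ⟨l, hl, heq, hle⟩
    · exact .inl ⟨l, mem_insert_of_mem hl, hpos⟩
    · have hlj : l ≠ j := fun h => (hle i).not_gt (h ▸ hlt)
      exact .inr ⟨l, by simp [hlj, hl], heq, hle⟩

lemma an_le_of_maximal_feasibleSet {J : Finset (Fin m)} (hap : ∀ i j, 0 ≤ ap i j)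
    (hsolv : ∃ x, SysSol hm ap an b x) (hJ : Maximal (FeasibleSet ap an b) J) {j : Fin m}
    (hj : j ∉ J) (i : Fin n) : an i j ≤ b i := by
  by_contra! hlt
  obtain ⟨x, hx⟩ := hsolv
  have hxj : x j ≠ 0 := fun h => (hx.an_le hap i h).not_gt hlt
  have hinsert : FeasibleSet ap an b (insert j J) :=
    hJ.prop.insert (fun _ => hx.ap_eq_zero hap hxj) hlt
  exact hj (hJ.le_of_ge hinsert (subset_insert j J) (mem_insert_self j J))

section ResidualTuple

variable {hn : 0 < n}

/-- The minimum of the residua `b h ← a⁺ h j` over the rows `h`: the largest value in `[0, 1]` that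
a solution may take at `j`. -/
noncomputable def residualBound (hn : 0 < n) (ap : Fin n → Fin m → ℝ) (b : Fin n → ℝ)
    (j : Fin m) : ℝ :=
  univ.inf' ⟨⟨0, hn⟩, mem_univ _⟩ fun h => resP (b h) (ap h j)

/-- The map `f` of the theorem: the tuple equal to `residualBound` on `J` and to `0` elsewhere. -/
noncomputable def residualTuple (hn : 0 < n) (ap : Fin n → Fin m → ℝ) (b : Fin n → ℝ)
    (J : Finset (Fin m)) (j : Fin m) : ℝ :=
  if j ∈ J then residualBound hn ap b j else 0

lemma residualBound_le_one (j : Fin m) : residualBound hn ap b j ≤ 1 :=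
  (inf'_le _ (mem_univ ⟨0, hn⟩)).trans (resP_le_one _ _)

lemma le_residualBound_iff (hap : ∀ i j, 0 ≤ ap i j) (hb : ∀ i, 0 ≤ b i) {j : Fin m} {t : ℝ}
    (ht : t ≤ 1) : t ≤ residualBound hn ap b j ↔ ∀ i, ap i j * t ≤ b i := by
  refine (le_inf'_iff _ _).trans ?_
  simp only [mem_univ, true_imp_iff, le_resP_iff (hap _ j) (hb _) ht]

lemma ap_mul_residualBound_le (hap : ∀ i j, 0 ≤ ap i j) (hb : ∀ i, 0 ≤ b i) (i : Fin n)
    (j : Fin m) : ap i j * residualBound hn ap b j ≤ b i :=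
  (le_residualBound_iff hap hb (residualBound_le_one j)).1 le_rfl i

lemma residualBound_nonneg (hap : ∀ i j, 0 ≤ ap i j) (hb : ∀ i, 0 ≤ b i) (j : Fin m) :
    0 ≤ residualBound hn ap b j :=
  (le_residualBound_iff hap hb zero_le_one).2 fun i => by simpa using hb i

lemma FeasibleSet.residualBound_pos {J : Finset (Fin m)} (hap : ∀ i j, 0 ≤ ap i j)
    (hb : ∀ i, 0 ≤ b i) (hJ : FeasibleSet ap an b J) {j : Fin m} (hj : j ∈ J) :
    0 < residualBound hn ap b j :=
  (lt_inf'_iff _).2 fun h _ =>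
    resP_pos (hap h j) (hb h) fun hh => ((feasibleSet_iff.1 hJ h).1 hh).1 j hj

lemma ap_mul_residualBound_eq {i : Fin n} {j : Fin m} (hi : 0 < b i) (hle : b i ≤ ap i j)
    (hmin : ∀ h, resP (b i) (ap i j) ≤ resP (b h) (ap h j)) :
    ap i j * residualBound hn ap b j = b i := by
  have heq : residualBound hn ap b j = resP (b i) (ap i j) :=
    (inf'_le _ (mem_univ i)).antisymm (le_inf' _ _ fun h _ => hmin h)
  rw [heq, mul_resP_of_le hi hle]

lemma residualTuple_mono (hap : ∀ i j, 0 ≤ ap i j) (hb : ∀ i, 0 ≤ b i) :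
    Monotone (residualTuple hn ap b) := by
  intro J K hJK j
  unfold residualTuple
  split_ifs with hJ hK
  exacts [le_rfl, (hK (hJK hJ)).elim, residualBound_nonneg hap hb j, le_rfl]

lemma FeasibleSet.subset_of_residualTuple_le {J K : Finset (Fin m)} (hap : ∀ i j, 0 ≤ ap i j)
    (hb : ∀ i, 0 ≤ b i) (hJ : FeasibleSet ap an b J)
    (hle : residualTuple hn ap b J ≤ residualTuple hn ap b K) : J ⊆ K := by
  intro j hj
  by_contra hjK
  have hbound : residualBound hn ap b j ≤ 0 := by simpa [residualTuple, hj, hjK] using hle j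
  exact hbound.not_gt (hJ.residualBound_pos hap hb hj)

lemma SysSol.le_residualTuple_support {x : Fin m → ℝ} (hap : ∀ i j, 0 ≤ ap i j)
    (hx : SysSol hm ap an b x) : x ≤ residualTuple hn ap b {j | x j ≠ 0} := by
  intro j
  by_cases hj : x j = 0
  · simp [residualTuple, hj]
  · rw [residualTuple, if_pos (by simpa using hj),
      le_residualBound_iff hap (hx.rhs_nonneg hap) (hx.1 j).2]
    exact fun i => hx.ap_mul_le hap i j

lemma FeasibleSet.sysSol_residualTuple {J : Finset (Fin m)} (hap : ∀ i j, 0 ≤ ap i j)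
    (hb : ∀ i, 0 ≤ b i) (hJ : FeasibleSet ap an b J) (hneg : ∀ j ∉ J, ∀ i, an i j ≤ b i) :
    SysSol hm ap an b (residualTuple hn ap b J) := by
  have hbox (j) : residualTuple hn ap b J j ∈ Set.Icc 0 1 := by
    unfold residualTuple
    split_ifs
    exacts [⟨residualBound_nonneg hap hb j, residualBound_le_one j⟩, ⟨le_rfl, zero_le_one⟩]
  refine ⟨hbox, fun i => le_antisymm ((eqLHS_le_iff (hb i)).2 fun j => ?_) ?_⟩
  · by_cases hj : j ∈ J
    · simp [residualTuple, hj, ap_mul_residualBound_le hap hb, (hJ.residualBound_pos hap hb hj).ne']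
    · simp [residualTuple, hj, hb i, hneg j hj i]
  · rcases (hb i).eq_or_lt with hi | hi
    · exact hi ▸ eqLHS_nonneg (hap i) fun j => (hbox j).1
    · refine (le_eqLHS_iff hi).2 ?_
      rcases (feasibleSet_iff.1 hJ i).2 hi with ⟨j, hj, hle, hmin⟩ | ⟨j, hj, heq, -⟩
      · exact ⟨j, .inl (by simp [residualTuple, hj, ap_mul_residualBound_eq hi hle hmin])⟩
      · exact ⟨j, .inr ⟨by simp [residualTuple, hj], heq.ge⟩⟩

end ResidualTuple

end System

theorem stmt14_general {m n : ℕ} (hm : 0 < m) (hn : 0 < n) {ap an : Fin n → Fin m → ℝ}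
    {b : Fin n → ℝ} (hap : ∀ i j, 0 ≤ ap i j) (han : ∀ i j, 0 ≤ an i j)
    (hsolv : ∃ x, SysSol hm ap an b x) :
    Set.BijOn (residualTuple hn ap b)
      {J | Maximal (FeasibleSet ap an b) J} {x | Maximal (SysSol hm ap an b) x} := by
  have hb : ∀ i, 0 ≤ b i := hsolv.elim fun _ hx => hx.rhs_nonneg hap
  refine bijOn_maximal_of_le_comp (residualTuple_mono hap hb)
    (fun _ _ hJ => hJ.subset_of_residualTuple_le hap hb) (fun J hJ => ?_)
    (fun _ hx => hx.feasibleSet_support hap han) (fun _ hx => hx.le_residualTuple_support hap)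
  exact hJ.prop.sysSol_residualTuple hap hb fun _ => an_le_of_maximal_feasibleSet hap hsolv hJ

theorem stmt14 (m n : ℕ) (hm : 0 < m) (hn : 0 < n)
    (ap an : Fin n → Fin m → ℝ) (b : Fin n → ℝ)
    (hap : ∀ i j, ap i j ∈ Set.Icc (0:ℝ) 1) (han : ∀ i j, an i j ∈ Set.Icc (0:ℝ) 1)
    (hb : ∀ i, b i ∈ Set.Icc (0:ℝ) 1)
    (hsolv : ∃ x, SysSol hm ap an b x) :
    Set.BijOn
      (fun (Jp : Finset (Fin m)) (j : Fin m) =>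
        if j ∈ Jp then Finset.univ.inf' ⟨⟨0, hn⟩, Finset.mem_univ _⟩ (fun h => resP (b h) (ap h j)) else 0)
      {Jp : Finset (Fin m) | (∃ Jm, FeasiblePair ap an b Jp Jm) ∧
        ∀ K : Finset (Fin m), (∃ Jm, FeasiblePair ap an b K Jm) → ¬ Jp ⊂ K}
      {x : Fin m → ℝ | SysSol hm ap an b x ∧ ∀ y, SysSol hm ap an b y → ¬ x < y} ∧
    (fun (Jp : Finset (Fin m)) (j : Fin m) =>
        if j ∈ Jp then Finset.univ.inf' ⟨⟨0, hn⟩, Finset.mem_univ _⟩ (fun h => resP (b h) (ap h j)) else 0) ''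
      {Jp : Finset (Fin m) | (∃ Jm, FeasiblePair ap an b Jp Jm) ∧
        ∀ K : Finset (Fin m), (∃ Jm, FeasiblePair ap an b K Jm) → ¬ Jp ⊂ K} =
      {x : Fin m → ℝ | SysSol hm ap an b x ∧ ∀ y, SysSol hm ap an b y → ¬ x < y} ∧
    {Jp : Finset (Fin m) | (∃ Jm, FeasiblePair ap an b Jp Jm) ∧
        ∀ K : Finset (Fin m), (∃ Jm, FeasiblePair ap an b K Jm) → ¬ Jp ⊂ K}.ncard =
      {x : Fin m → ℝ | SysSol hm ap an b x ∧ ∀ y, SysSol hm ap an b y → ¬ x < y}.ncard := by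
  have hbij := stmt14_general hm hn (fun i j => (hap i j).1) (fun i j => (han i j).1) hsolv
  rw [setOf_maximal, setOf_maximal] at hbij
  exact ⟨hbij, hbij.image_eq, hbij.ncard_eq⟩
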